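/- Let n ≥ 1, let d ∈ ℝ^n satisfy d ≥ 0 entrywise and d ≠ 0, and let y ∈ ℝ^n. Then for every t ∈ ℝ one has 2 · sup_{c ∈ [0, ∑_i d_i]} ( c·t + th_{d,y}(c) ) = ∑_i y_i + t·(∑_i d_i) + ‖y + t·d‖₁, where ‖·‖₁ is the vector 1-norm. (This identifies the Legendre–Fenchel transform of −th_{d,y}.) -/

import Mathlib

/-!
Write `F s = ∑ j, (y j - s * d j)⁺`, so that `th d y c` is the minimum of the convex function
`s ↦ F s + s * c` over the breakpoints `s = y i / d i`. For `c ∈ [0, ∑ d]` this is its minimum over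
all `s`: at a breakpoint `r` splitting the weights `d` at level `c`, i.e.
`∑_{y j > r * d j} d j ≤ c ≤ ∑_{y j ≥ r * d j} d j`, the two bounds are minus the one-sided slopes
of `F`, so `-c` is a subgradient of `F` at `r`. Hence `c * t + th d y c ≤ F (-t)`, with equality
when `-c` is a subgradient of `F` at `-t`, and `2 * a⁺ = a + |a|` evaluates `F (-t)`.
-/

open Finset

noncomputable def th {n : ℕ} (d y : Fin n → ℝ) (c : ℝ) : ℝ :=
  sInf ((fun i => (∑ j, max (y j - y i / d i * d j) 0) + y i / d i * c) ''
    {i : Fin n | 0 < d i})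

noncomputable def psum {n : ℕ} (d : Fin n → ℝ) (σ : Equiv.Perm (Fin n)) (j : ℕ) : ℝ :=
  ∑ i ∈ Finset.univ.filter (fun i : Fin n => (i : ℕ) < j), d (σ i)

noncomputable def Emap {n : ℕ} (d y : Fin n → ℝ) (σ : Equiv.Perm (Fin n)) : Fin n → ℝ :=
  fun k => th d y (psum d σ ((σ.symm k : ℕ) + 1)) - th d y (psum d σ (σ.symm k : ℕ))

def dStoch {n : ℕ} (d : Fin n → ℝ) (A : Matrix (Fin n) (Fin n) ℝ) : Prop :=
  (∀ i j, 0 ≤ A i j) ∧ (∀ j, ∑ i, A i j = 1) ∧ A.mulVec d = d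

def Mset {n : ℕ} (d y : Fin n → ℝ) : Set (Fin n → ℝ) :=
  {x | ∃ A : Matrix (Fin n) (Fin n) ℝ, dStoch d A ∧ A.mulVec y = x}

noncomputable def Aentry {n : ℕ} (d : Fin n → ℝ) (σ τ : Equiv.Perm (Fin n))
    (α : ℕ → Fin n) (j k : Fin n) : ℝ :=
  if k = α j.val ∧ (α j.val).val < (α (j.val + 1)).val then
    (psum d τ ((α j.val).val + 1) - psum d σ j.val) / d (τ (α j.val))
  else if (α j.val).val < k.val ∧ k.val < (α (j.val + 1)).val then 1
  else if (α j.val).val < (α (j.val + 1)).val ∧ k = α (j.val + 1) then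
    (psum d σ (j.val + 1) - psum d τ (α (j.val + 1)).val) / d (τ (α (j.val + 1)))
  else if α j.val = α (j.val + 1) ∧ k = α (j.val + 1) then
    d (σ j) / d (τ (α (j.val + 1)))
  else 0

noncomputable def Amat {n : ℕ} (d : Fin n → ℝ) (σ τ : Equiv.Perm (Fin n))
    (α : ℕ → Fin n) : Matrix (Fin n) (Fin n) ℝ :=
  Matrix.of fun p q => Aentry d σ τ α (σ.symm p) (τ.symm q)

section Quantile

variable {ι α M : Type*} [LinearOrder α] [AddCommMonoid M] [LinearOrder M]

theorem exists_sum_filter_lt_le_and_le_sum_filter_le {s : Finset ι} (hs : s.Nonempty)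
    (f : ι → α) (w : ι → M) {c : M} (hc₀ : 0 ≤ c) (hc : c ≤ ∑ j ∈ s, w j) :
    ∃ i ∈ s, ∑ j ∈ s with f i < f j, w j ≤ c ∧ c ≤ ∑ j ∈ s with f i ≤ f j, w j := by
  have hne : {i ∈ s | ∑ j ∈ s with f i < f j, w j ≤ c}.Nonempty := by
    obtain ⟨m, hm, hmax⟩ := s.exists_max_image f hs
    have hempty : {j ∈ s | f m < f j} = ∅ := filter_false_of_mem fun j hj => (hmax j hj).not_gt
    exact ⟨m, mem_filter.2 ⟨hm, by rwa [hempty, sum_empty]⟩⟩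
  obtain ⟨i, hi, hmin⟩ := exists_min_image _ f hne
  obtain ⟨his, hic⟩ := mem_filter.1 hi
  refine ⟨i, his, hic, ?_⟩
  by_cases hbelow : {j ∈ s | f j < f i}.Nonempty
  · -- Lowering the level to the next smaller value `f k` turns `≤` into `<`.
    obtain ⟨k, hk, hmax⟩ := exists_max_image _ f hbelow
    obtain ⟨hks, hki⟩ := mem_filter.1 hk
    have hlevel : {j ∈ s | f i ≤ f j} = {j ∈ s | f k < f j} :=
      filter_congr fun j hj => ⟨hki.trans_le, fun hkj => le_of_not_gt fun hji =>
        (hmax j (mem_filter.2 ⟨hj, hji⟩)).not_gt hkj⟩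
    rw [hlevel]
    exact le_of_not_ge fun hkc => (hmin k (mem_filter.2 ⟨hks, hkc⟩)).not_gt hki
  · have hall : {j ∈ s | f i ≤ f j} = s :=
      filter_true_of_mem fun j hj => le_of_not_gt fun hji => hbelow ⟨j, mem_filter.2 ⟨hj, hji⟩⟩
    rwa [hall]

variable {𝕜 : Type*} [Fintype ι] [Field 𝕜] [LinearOrder 𝕜] [IsStrictOrderedRing 𝕜]

theorem exists_sum_filter_div_mul_lt_le_and_le_sum_filter_div_mul_le {d : ι → 𝕜} (hd : 0 < d)
    (y : ι → 𝕜) {c : 𝕜} (hc₀ : 0 ≤ c) (hc : c ≤ ∑ j, d j) :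
    ∃ i, 0 < d i ∧ ∑ j with y i / d i * d j < y j, d j ≤ c ∧
      c ≤ ∑ j with y i / d i * d j ≤ y j, d j := by
  obtain ⟨hd₀, i₀, hi₀⟩ := Pi.lt_def.1 hd
  have sum_support (s : Finset ι) : ∑ j ∈ s with 0 < d j, d j = ∑ j ∈ s, d j :=
    sum_filter_of_ne fun j _ hj => (hd₀ j).lt_of_ne' hj
  obtain ⟨i, hi, hlt, hle⟩ := exists_sum_filter_lt_le_and_le_sum_filter_le
    (s := {j | 0 < d j}) ⟨i₀, (mem_filter_univ i₀).2 hi₀⟩ (fun j => y j / d j) d hc₀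
    (hc.trans_eq (sum_support univ).symm)
  have hpos {j : ι} (hj : j ∈ ({j | 0 < d j} : Finset ι)) : 0 < d j := (mem_filter_univ j).1 hj
  rw [filter_congr fun j hj => lt_div_iff₀ (hpos hj), filter_comm, sum_support] at hlt
  rw [filter_congr fun j hj => le_div_iff₀ (hpos hj), filter_comm, sum_support] at hle
  exact ⟨i, hpos hi, hlt, hle⟩

end Quantile

section HockeyStick

variable {ι R : Type*} [Fintype ι] [CommRing R] [LinearOrder R]

/-- The hockey-stick divergence `∑ j, (y j - s * d j)⁺` of `y` from `d` at level `s`. The lines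
whose minimum defines `th d y` are `c ↦ hockeyStick d y s + s * c` with `s = y i / d i`. -/
def hockeyStick (d y : ι → R) (s : R) : R :=
  ∑ j, (y j - s * d j)⁺

variable [IsStrictOrderedRing R] {d y : ι → R} {r s c : R}

theorem sum_sub_mul_le_hockeyStick (d y : ι → R) (s : R) (A : Finset ι) :
    ∑ j ∈ A, (y j - s * d j) ≤ hockeyStick d y s :=
  calc ∑ j ∈ A, (y j - s * d j) ≤ ∑ j ∈ A, (y j - s * d j)⁺ := sum_le_sum fun _ _ => le_posPart _
    _ ≤ ∑ j, (y j - s * d j)⁺ :=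
      sum_le_sum_of_subset_of_nonneg (subset_univ A) fun _ _ _ => posPart_nonneg _

theorem hockeyStick_eq_sum_sub_mul {A : Finset ι} (hA : ∀ j ∈ A, s * d j ≤ y j)
    (hA' : ∀ j ∉ A, y j ≤ s * d j) : hockeyStick d y s = ∑ j ∈ A, (y j - s * d j) :=
  calc hockeyStick d y s = ∑ j ∈ A, (y j - s * d j)⁺ :=
      (sum_subset (subset_univ A) fun j _ hj => posPart_of_nonpos (sub_nonpos.2 (hA' j hj))).symm
    _ = ∑ j ∈ A, (y j - s * d j) :=
      sum_congr rfl fun j hj => posPart_of_nonneg (sub_nonneg.2 (hA j hj))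

theorem hockeyStick_add_mul_sum_le {A : Finset ι} (hA : ∀ j ∈ A, r * d j ≤ y j)
    (hA' : ∀ j ∉ A, y j ≤ r * d j) (s : R) :
    hockeyStick d y r + (r - s) * ∑ j ∈ A, d j ≤ hockeyStick d y s :=
  calc hockeyStick d y r + (r - s) * ∑ j ∈ A, d j = ∑ j ∈ A, (y j - s * d j) := by
        rw [hockeyStick_eq_sum_sub_mul hA hA', mul_sum, ← sum_add_distrib]
        exact sum_congr rfl fun j _ => by ring
    _ ≤ hockeyStick d y s := sum_sub_mul_le_hockeyStick d y s A

theorem hockeyStick_add_mul_le (hlt : ∑ j with r * d j < y j, d j ≤ c)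
    (hle : c ≤ ∑ j with r * d j ≤ y j, d j) (s : R) :
    hockeyStick d y r + r * c ≤ hockeyStick d y s + s * c := by
  suffices hockeyStick d y r + (r - s) * c ≤ hockeyStick d y s by linarith
  rcases le_total r s with hrs | hsr
  · exact (add_le_add le_rfl (mul_le_mul_of_nonpos_left hlt (sub_nonpos.2 hrs))).trans
      (hockeyStick_add_mul_sum_le (by simp +contextual [le_of_lt]) (by simp) s)
  · exact (add_le_add le_rfl (mul_le_mul_of_nonneg_left hle (sub_nonneg.2 hsr))).trans
      (hockeyStick_add_mul_sum_le (by simp) (by simp +contextual [le_of_lt]) s)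

theorem two_mul_hockeyStick (d y : ι → R) (s : R) :
    2 * hockeyStick d y s = ∑ j, y j - s * ∑ j, d j + ∑ j, |y j - s * d j| := by
  rw [hockeyStick, mul_sum, mul_sum, ← sum_sub_distrib, ← sum_add_distrib]
  refine sum_congr rfl fun j _ => ?_
  rw [add_abs_eq_two_nsmul_posPart, nsmul_eq_mul, Nat.cast_ofNat]

end HockeyStick

section Thermomajorization

variable {n : ℕ} {d : Fin n → ℝ}

theorem th_le_hockeyStick_add_mul_of_pos (y : Fin n → ℝ) (c : ℝ) {i : Fin n} (hi : 0 < d i) :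
    th d y c ≤ hockeyStick d y (y i / d i) + y i / d i * c :=
  csInf_le ((Set.toFinite _).image _).bddBelow ⟨i, hi, rfl⟩

theorem th_le_hockeyStick_add_mul (hd : 0 < d) (y : Fin n → ℝ) {c : ℝ}
    (hc : c ∈ Set.Icc 0 (∑ i, d i)) (s : ℝ) : th d y c ≤ hockeyStick d y s + s * c := by
  obtain ⟨i, hi, hlt, hle⟩ :=
    exists_sum_filter_div_mul_lt_le_and_le_sum_filter_div_mul_le hd y hc.1 hc.2
  exact (th_le_hockeyStick_add_mul_of_pos y c hi).trans (hockeyStick_add_mul_le hlt hle s)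

theorem hockeyStick_add_mul_sum_le_th (hd : 0 < d) (y : Fin n → ℝ) (s : ℝ) :
    hockeyStick d y s + s * ∑ j with s * d j ≤ y j, d j ≤
      th d y (∑ j with s * d j ≤ y j, d j) := by
  obtain ⟨-, i₀, hi₀⟩ := Pi.lt_def.1 hd
  refine le_csInf ⟨_, i₀, hi₀, rfl⟩ ?_
  rintro _ ⟨i, -, rfl⟩
  have hsub := hockeyStick_add_mul_sum_le (A := {j | s * d j ≤ y j}) (r := s) (d := d) (y := y)
    (by simp) (by simp +contextual [le_of_lt]) (y i / d i)
  change _ ≤ hockeyStick d y (y i / d i) + _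
  linarith

theorem isGreatest_mul_add_th (hd : 0 < d) (y : Fin n → ℝ) (t : ℝ) :
    IsGreatest ((fun c => c * t + th d y c) '' Set.Icc 0 (∑ i, d i)) (hockeyStick d y (-t)) := by
  have hle : ∀ c ∈ Set.Icc 0 (∑ i, d i), c * t + th d y c ≤ hockeyStick d y (-t) := fun c hc => by
    linarith [th_le_hockeyStick_add_mul hd y hc (-t)]
  have hmem : ∑ j with -t * d j ≤ y j, d j ∈ Set.Icc 0 (∑ i, d i) :=
    ⟨sum_nonneg fun j _ => hd.le j, sum_le_univ_sum_of_nonneg hd.le⟩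
  refine ⟨⟨_, hmem, (hle _ hmem).antisymm ?_⟩, Set.forall_mem_image.2 hle⟩
  linarith [hockeyStick_add_mul_sum_le_th hd y (-t)]

end Thermomajorization

/-- Legendre–Fenchel transform of the negative thermomajorization curve. -/
theorem stmt0 (n : ℕ) (hn : 1 ≤ n) (d y : Fin n → ℝ) (hd : ∀ i, 0 ≤ d i)
    (hd0 : d ≠ 0) (t : ℝ) :
    2 * sSup ((fun c => c * t + th d y c) '' Set.Icc (0 : ℝ) (∑ i, d i)) =
      (∑ i, y i) + t * (∑ i, d i) + ∑ i, |y i + t * d i| := by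
  have hpos : 0 < d := lt_of_le_of_ne hd hd0.symm
  rw [(isGreatest_mul_add_th hpos y t).csSup_eq, two_mul_hockeyStick]
  simp only [neg_mul, sub_neg_eq_add]
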